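/- Let M be a linear tree-to-word transducer containing a rule q, f → u₀ q₁(x_{σ(1)}) … q_n(x_{σ(n)}) u_n in which, for some index i, u_i = ε and the languages L_{q_i} and L_{q_{i+1}} are both periodic of the same period w. Let M' be obtained from M by replacing this rule by the rule in which the adjacent occurrences q_i(x_{σ(i)}) and q_{i+1}(x_{σ(i+1)}) are swapped, i.e., q, f → u₀ … u_{i-1} q_{i+1}(x_{σ(i+1)}) q_i(x_{σ(i)}) u_{i+1} … u_n. Then M and M' are equivalent. -/

import Mathlib

namespace LTWpaper

/-- Trees over a ranked alphabet: a symbol of arity `n` with `n` children. -/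
inductive RTree (F : Type) (ar : F → ℕ) : Type
  | node (f : F) (ts : Fin (ar f) → RTree F ar) : RTree F ar

/-- A rule right-hand side `u₀ q₁(x_{σ(1)}) u₁ … q_n(x_{σ(n)}) u_n`:
`word i` is `u_i` (for `i : Fin (n+1)`), `st i` is `q_{i+1}` (for `i : Fin n`),
and position `i` reads the subtree `x_{perm i}`. -/
structure LTWRule (Δ Q : Type) (n : ℕ) where
  word : Fin (n + 1) → List Δ
  st : Fin n → Q
  perm : Equiv.Perm (Fin n)

/-- A (deterministic) linear tree-to-word transducer with axiom `pre init(x) post`. -/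
structure LTW (F : Type) (ar : F → ℕ) (Δ Q : Type) where
  pre : List Δ
  init : Q
  post : List Δ
  rules : Q → (f : F) → Option (LTWRule Δ Q (ar f))

/-- `u 0 ++ ws 0 ++ u 1 ++ ws 1 ++ ⋯ ++ ws (n-1) ++ u n`. -/
def interleave {Δ : Type} (n : ℕ) (u : Fin (n + 1) → List Δ) (ws : Fin n → List Δ) :
    List Δ :=
  u 0 ++ (List.finRange n).foldr (fun i acc => ws i ++ u i.succ ++ acc) []

/-- The partial function `⟦M⟧_q` computed by state `q`. -/
def LTW.semState {F Δ Q : Type} {ar : F → ℕ} (M : LTW F ar Δ Q) :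
    RTree F ar → Q → Option (List Δ)
  | .node f ts, q =>
    match M.rules q f with
    | none => none
    | some r =>
      if h : ∀ i : Fin (ar f), (M.semState (ts (r.perm i)) (r.st i)).isSome then
        some (interleave (ar f) r.word fun i => (M.semState (ts (r.perm i)) (r.st i)).get (h i))
      else none

/-- The partial function `⟦M⟧` computed by the transducer. -/
def LTW.sem {F Δ Q : Type} {ar : F → ℕ} (M : LTW F ar Δ Q) (t : RTree F ar) :
    Option (List Δ) :=
  (M.semState t M.init).map fun w => M.pre ++ w ++ M.post

/-- The output language `L_q` of a state. -/
def LTW.lang {F Δ Q : Type} {ar : F → ℕ} (M : LTW F ar Δ Q) (q : Q) : Set (List Δ) :=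
  {w | ∃ t, M.semState t q = some w}

/-- Standing assumption: every state has nonempty domain. -/
def LTW.NonemptyDoms {F Δ Q : Type} {ar : F → ℕ} (M : LTW F ar Δ Q) : Prop :=
  ∀ q : Q, ∃ t w, M.semState t q = some w

/-- `w^n`, the `n`-fold concatenation of the word `w`. -/
def listPow {Δ : Type} (w : List Δ) : ℕ → List Δ
  | 0 => []
  | n + 1 => w ++ listPow w n

/-- `lcp L = ε`: the only common prefix of all words of `L` is the empty word. -/
def LcpEps {Δ : Type} (L : Set (List Δ)) : Prop :=
  ∀ w : List Δ, (∀ v ∈ L, w <+: v) → w = []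

/-- `lcs L = ε`: the only common suffix of all words of `L` is the empty word. -/
def LcsEps {Δ : Type} (L : Set (List Δ)) : Prop :=
  ∀ w : List Δ, (∀ v ∈ L, w <:+ v) → w = []

/-- A language is earliest if `lcp L = lcs L = ε`. -/
def EarliestLang {Δ : Type} (L : Set (List Δ)) : Prop := LcpEps L ∧ LcsEps L

/-- `L ⊆ w*`. -/
def SubPow {Δ : Type} (w : List Δ) (L : Set (List Δ)) : Prop :=
  ∀ v ∈ L, ∃ n : ℕ, v = listPow w n

/-- `L` is periodic of period `w`: `w` is a smallest word with `L ⊆ w*`. -/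
def PeriodicOf {Δ : Type} (L : Set (List Δ)) (w : List Δ) : Prop :=
  SubPow w L ∧ ∀ w' : List Δ, SubPow w' L → w.length ≤ w'.length

/-- `L` is periodic. -/
def Periodic {Δ : Type} (L : Set (List Δ)) : Prop := ∃ w, PeriodicOf L w

/-- `L` is quasi-periodic on the left of handle `u` and period `w`:
`w` is a smallest word with `L ⊆ u w*`. -/
def QPLeftOf {Δ : Type} (L : Set (List Δ)) (u w : List Δ) : Prop :=
  (∀ v ∈ L, ∃ n : ℕ, v = u ++ listPow w n) ∧
  ∀ w' : List Δ, (∀ v ∈ L, ∃ n : ℕ, v = u ++ listPow w' n) → w.length ≤ w'.length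

/-- `L` is quasi-periodic on the right of handle `u` and period `w`:
`w` is a smallest word with `L ⊆ w* u`. -/
def QPRightOf {Δ : Type} (L : Set (List Δ)) (u w : List Δ) : Prop :=
  (∀ v ∈ L, ∃ n : ℕ, v = listPow w n ++ u) ∧
  ∀ w' : List Δ, (∀ v ∈ L, ∃ n : ℕ, v = listPow w' n ++ u) → w.length ≤ w'.length

/-- `L` is quasi-periodic (on the left or on the right). -/
def QuasiPeriodic {Δ : Type} (L : Set (List Δ)) : Prop :=
  (∃ u w, QPLeftOf L u w) ∨ (∃ u w, QPRightOf L u w)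

/-- The language `L u = { v u : v ∈ L }`. -/
def appendLang {Δ : Type} (L : Set (List Δ)) (u : List Δ) : Set (List Δ) :=
  {v | ∃ x ∈ L, v = x ++ u}

/-- The language `L₁ u L₂ = { a u b : a ∈ L₁, b ∈ L₂ }`. -/
def pairLang {Δ : Type} (L₁ : Set (List Δ)) (u : List Δ) (L₂ : Set (List Δ)) :
    Set (List Δ) :=
  {v | ∃ a ∈ L₁, ∃ b ∈ L₂, v = a ++ u ++ b}

/-- An LTW is earliest: every state `q` satisfies `lcp L_q = lcs L_q = ε`, and in every rule
every part `qᵢ(x) uᵢ` satisfies `lcp (L_{qᵢ} uᵢ) = ε`. -/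
def LTW.Earliest {F Δ Q : Type} {ar : F → ℕ} (M : LTW F ar Δ Q) : Prop :=
  (∀ q : Q, EarliestLang (M.lang q)) ∧
  ∀ (q : Q) (f : F) (r : LTWRule Δ Q (ar f)), M.rules q f = some r →
    ∀ i : Fin (ar f), LcpEps (appendLang (M.lang (r.st i)) (r.word i.succ))

/-- An erasing state: `L_q = {ε}`. -/
def LTW.Erasing {F Δ Q : Type} {ar : F → ℕ} (M : LTW F ar Δ Q) (q : Q) : Prop :=
  M.lang q = {([] : List Δ)}

/-- Erase-ordered: in every rule, if `qᵢ` is erasing then every later `q_j` is erasing,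
`σ(i) ≤ σ(j)` and `u_j = ε`. -/
def LTW.EraseOrdered {F Δ Q : Type} {ar : F → ℕ} (M : LTW F ar Δ Q) : Prop :=
  ∀ (q : Q) (f : F) (r : LTWRule Δ Q (ar f)), M.rules q f = some r →
    ∀ i j : Fin (ar f), M.Erasing (r.st i) → i ≤ j →
      M.Erasing (r.st j) ∧ r.perm i ≤ r.perm j ∧ r.word j.succ = []

/-- Co-reachable pairs of states of two transducers over the same input alphabet. -/
inductive CoReach {F Δ Q₁ Q₂ : Type} {ar : F → ℕ}
    (M₁ : LTW F ar Δ Q₁) (M₂ : LTW F ar Δ Q₂) : Q₁ → Q₂ → Prop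
  | base : CoReach M₁ M₂ M₁.init M₂.init
  | step {q₁ : Q₁} {q₂ : Q₂} {f : F} {r₁ : LTWRule Δ Q₁ (ar f)} {r₂ : LTWRule Δ Q₂ (ar f)}
      {i j : Fin (ar f)} :
      CoReach M₁ M₂ q₁ q₂ → M₁.rules q₁ f = some r₁ → M₂.rules q₂ f = some r₂ →
      r₁.perm i = r₂.perm j → CoReach M₁ M₂ (r₁.st i) (r₂.st j)

/-- Two LTWs are same-ordered: co-reachable states either both lack a rule for `f`,
or have rules for `f` with the same permutation. -/
def SameOrdered {F Δ Q₁ Q₂ : Type} {ar : F → ℕ}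
    (M₁ : LTW F ar Δ Q₁) (M₂ : LTW F ar Δ Q₂) : Prop :=
  ∀ q₁ q₂, CoReach M₁ M₂ q₁ q₂ → ∀ f : F,
    (M₁.rules q₁ f = none ∧ M₂.rules q₂ f = none) ∨
    ∃ (r₁ : LTWRule Δ Q₁ (ar f)) (r₂ : LTWRule Δ Q₂ (ar f)),
      M₁.rules q₁ f = some r₁ ∧ M₂.rules q₂ f = some r₂ ∧ r₁.perm = r₂.perm

/-- `Accessible q p`: state `p` is accessible from state `q`. -/
inductive LTW.Accessible {F Δ Q : Type} {ar : F → ℕ} (M : LTW F ar Δ Q) : Q → Q → Prop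
  | refl (q : Q) : M.Accessible q q
  | step {q p : Q} {f : F} {r : LTWRule Δ Q (ar f)} (i : Fin (ar f)) :
      M.Accessible q p → M.rules p f = some r → M.Accessible q (r.st i)

/-- Partial normal form. -/
def LTW.PartialNormalForm {F Δ Q : Type} {ar : F → ℕ} (M : LTW F ar Δ Q) : Prop :=
  (∀ q : Q, QuasiPeriodic (M.lang q) → EarliestLang (M.lang q)) ∧
  M.EraseOrdered ∧
  ∀ (q : Q) (f : F) (r : LTWRule Δ Q (ar f)), M.rules q f = some r →
    ∀ (i : ℕ) (hi : i + 1 < ar f),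
      QuasiPeriodic (pairLang (M.lang (r.st ⟨i, Nat.lt_of_succ_lt hi⟩))
          (r.word (Fin.succ ⟨i, Nat.lt_of_succ_lt hi⟩)) (M.lang (r.st ⟨i + 1, hi⟩))) →
      EarliestLang (pairLang (M.lang (r.st ⟨i, Nat.lt_of_succ_lt hi⟩))
          (r.word (Fin.succ ⟨i, Nat.lt_of_succ_lt hi⟩)) (M.lang (r.st ⟨i + 1, hi⟩))) ∧
      r.perm ⟨i, Nat.lt_of_succ_lt hi⟩ < r.perm ⟨i + 1, hi⟩

/-! If `a u b = b u a` for all outputs `a` and `b` at two adjacent positions separated by the word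
`u`, exchanging these positions leaves the output of the rule unchanged; for `u = ε` this holds
because powers of the same word commute. Since the output on `f(t₁, …, tₙ)` depends only on the
rule for `f` and on the outputs on the `tᵢ`, this local invariance propagates to all trees by
induction. -/

section Words

variable {Δ : Type}

theorem listPow_add (w : List Δ) (m n : ℕ) :
    listPow w (m + n) = listPow w m ++ listPow w n := by
  induction m with
  | zero => simp [listPow]
  | succ m ih => simp [Nat.succ_add, listPow, ih]

theorem SubPow.append_comm {w a b : List Δ} {L L' : Set (List Δ)} (hL : SubPow w L)
    (hL' : SubPow w L') (ha : a ∈ L) (hb : b ∈ L') : a ++ b = b ++ a := by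
  obtain ⟨m, rfl⟩ := hL a ha
  obtain ⟨n, rfl⟩ := hL' b hb
  rw [← listPow_add, ← listPow_add, Nat.add_comm]

theorem interleave_succ {n : ℕ} (u : Fin (n + 2) → List Δ) (ws : Fin (n + 1) → List Δ) :
    interleave (n + 1) u ws =
      u 0 ++ ws 0 ++ interleave n (u ∘ Fin.succ) (ws ∘ Fin.succ) := by
  simp [interleave, List.finRange_succ, List.foldr_map]

theorem interleave_comp_swap_zero_one {n : ℕ} (u : Fin (n + 3) → List Δ)
    (ws : Fin (n + 2) → List Δ) (h : ws 0 ++ u 1 ++ ws 1 = ws 1 ++ u 1 ++ ws 0) :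
    interleave (n + 2) u (ws ∘ Equiv.swap 0 1) = interleave (n + 2) u ws := by
  have tail_eq : ws ∘ Equiv.swap 0 1 ∘ Fin.succ ∘ Fin.succ = ws ∘ Fin.succ ∘ Fin.succ := by
    funext k
    have hk : k.succ.succ ≠ 1 := fun e => Fin.succ_ne_zero k (Fin.succ_injective _ e)
    simp [Equiv.swap_apply_of_ne_of_ne, hk]
  let rest := interleave n (u ∘ Fin.succ ∘ Fin.succ) (ws ∘ Fin.succ ∘ Fin.succ)
  calc interleave (n + 2) u (ws ∘ Equiv.swap 0 1)
      = u 0 ++ (ws 1 ++ u 1 ++ ws 0) ++ rest := by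
        simp [interleave_succ, Function.comp_assoc, tail_eq, rest]
    _ = u 0 ++ (ws 0 ++ u 1 ++ ws 1) ++ rest := by rw [h]
    _ = interleave (n + 2) u ws := by simp [interleave_succ, Function.comp_assoc, rest]

theorem interleave_comp_swap {n : ℕ} (u : Fin (n + 1) → List Δ) (ws : Fin n → List Δ)
    {i j : Fin n} (hij : (j : ℕ) = i + 1)
    (h : ws i ++ u i.succ ++ ws j = ws j ++ u i.succ ++ ws i) :
    interleave n u (ws ∘ Equiv.swap i j) = interleave n u ws := by
  induction n with
  | zero => exact i.elim0
  | succ n ih =>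
    cases j using Fin.cases with
    | zero => simp at hij
    | succ j =>
      cases i using Fin.cases with
      | zero =>
        cases n with
        | zero => exact j.elim0
        | succ n =>
          obtain rfl : j = 0 := Fin.ext (by simpa using hij)
          exact interleave_comp_swap_zero_one u ws h
      | succ i =>
        have head_eq : Equiv.swap i.succ j.succ 0 = 0 :=
          Equiv.swap_apply_of_ne_of_ne (Fin.succ_ne_zero i).symm (Fin.succ_ne_zero j).symm
        have tail_eq : (ws ∘ Equiv.swap i.succ j.succ) ∘ Fin.succ =
            (ws ∘ Fin.succ) ∘ Equiv.swap i j :=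
          funext fun k => congrArg ws ((Fin.succ_injective n).map_swap i j k).symm
        rw [interleave_succ, interleave_succ, tail_eq,
          ih (u ∘ Fin.succ) (ws ∘ Fin.succ) (by simpa using hij) h, Function.comp_apply, head_eq]

end Words

section Rules

variable {Δ Q : Type} {n : ℕ}

/-- The output of a rule, where `out k p` is the output of state `p` on the `k`-th subtree;
undefined as soon as one of the outputs the rule asks for is. -/
def LTWRule.eval (r : LTWRule Δ Q n) (out : Fin n → Q → Option (List Δ)) : Option (List Δ) :=
  if h : ∀ k, (out (r.perm k) (r.st k)).isSome then
    some (interleave n r.word fun k => (out (r.perm k) (r.st k)).get (h k))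
  else none

/-- The rule whose `k`-th occurrence `q(x)` is the `e k`-th one of `r`, the words `u₀, …, uₙ`
staying in place. -/
def LTWRule.reindex (r : LTWRule Δ Q n) (e : Equiv.Perm (Fin n)) : LTWRule Δ Q n :=
  ⟨r.word, fun k => r.st (e k), e.trans r.perm⟩

theorem LTWRule.eval_eq_some_iff {r : LTWRule Δ Q n} {out : Fin n → Q → Option (List Δ)}
    {w : List Δ} :
    r.eval out = some w ↔
      ∃ ws : Fin n → List Δ, (∀ k, out (r.perm k) (r.st k) = some (ws k)) ∧
        interleave n r.word ws = w := by
  constructor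
  · intro h
    obtain ⟨hdef, hw⟩ := Option.dite_none_right_eq_some.mp h
    exact ⟨_, fun k => (Option.some_get (hdef k)).symm, Option.some_injective _ hw⟩
  · rintro ⟨ws, hws, rfl⟩
    simp [LTWRule.eval, hws]

theorem LTWRule.eval_reindex {r : LTWRule Δ Q n} {e : Equiv.Perm (Fin n)}
    {out : Fin n → Q → Option (List Δ)}
    (h : ∀ ws : Fin n → List Δ, (∀ k, out (r.perm k) (r.st k) = some (ws k)) →
      interleave n r.word (ws ∘ e) = interleave n r.word ws) :
    (r.reindex e).eval out = r.eval out := by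
  ext w
  rw [eval_eq_some_iff, eval_eq_some_iff]
  constructor
  · rintro ⟨ws, hws, rfl⟩
    have hws' : ∀ k, out (r.perm k) (r.st k) = some ((ws ∘ e.symm) k) := fun k => by
      simpa [reindex] using hws (e.symm k)
    refine ⟨ws ∘ e.symm, hws', ?_⟩
    rw [← h _ hws', Function.comp_assoc, e.symm_comp_self, Function.comp_id]
    rfl
  · rintro ⟨ws, hws, rfl⟩
    exact ⟨ws ∘ e, fun k => hws (e k), h ws hws⟩

end Rules

section Transducers

variable {F Δ Q : Type} {ar : F → ℕ}

theorem LTW.semState_node (M : LTW F ar Δ Q) (f : F) (ts : Fin (ar f) → RTree F ar) (q : Q) :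
    M.semState (.node f ts) q =
      (M.rules q f).bind fun r => r.eval fun k => M.semState (ts k) := by
  rw [semState]
  cases M.rules q f <;> rfl

variable [DecidableEq F] [DecidableEq Q]

/-- The transducer obtained from `M` by making `r` the rule for state `q` and symbol `f`. -/
def LTW.setRule (M : LTW F ar Δ Q) (q : Q) (f : F) (r : LTWRule Δ Q (ar f)) : LTW F ar Δ Q :=
  ⟨M.pre, M.init, M.post, Function.update M.rules q (Function.update (M.rules q) f (some r))⟩

theorem LTW.setRule_rules_self (M : LTW F ar Δ Q) (q : Q) (f : F) (r : LTWRule Δ Q (ar f)) :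
    (M.setRule q f r).rules q f = some r := by
  simp [setRule]

theorem LTW.setRule_rules_of_ne (M : LTW F ar Δ Q) {q q₀ : Q} {f f₀ : F}
    (h : ¬(q = q₀ ∧ f = f₀)) (r : LTWRule Δ Q (ar f₀)) :
    (M.setRule q₀ f₀ r).rules q f = M.rules q f := by
  by_cases hq : q = q₀
  · subst hq
    have hf : f ≠ f₀ := fun hf => h ⟨rfl, hf⟩
    simp [setRule, hf]
  · simp [setRule, hq]

variable {M : LTW F ar Δ Q} {q₀ : Q} {f₀ : F} {r r' : LTWRule Δ Q (ar f₀)}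

theorem LTW.semState_setRule (hr : M.rules q₀ f₀ = some r)
    (heval : ∀ ts : Fin (ar f₀) → RTree F ar,
      r'.eval (fun k => M.semState (ts k)) = r.eval fun k => M.semState (ts k))
    (t : RTree F ar) : (M.setRule q₀ f₀ r').semState t = M.semState t := by
  induction t with
  | node f ts ih =>
    funext q
    simp only [semState_node, ih]
    by_cases h : q = q₀ ∧ f = f₀
    · obtain ⟨rfl, rfl⟩ := h
      rw [setRule_rules_self, hr]
      exact heval ts
    · rw [setRule_rules_of_ne M h]

theorem LTW.sem_setRule (hr : M.rules q₀ f₀ = some r)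
    (heval : ∀ ts : Fin (ar f₀) → RTree F ar,
      r'.eval (fun k => M.semState (ts k)) = r.eval fun k => M.semState (ts k)) :
    (M.setRule q₀ f₀ r').sem = M.sem := by
  funext t
  rw [sem, sem, semState_setRule hr heval]
  rfl

theorem swap_adjacent_periodic_states_equivalent_general (hr : M.rules q₀ f₀ = some r)
    {i j : Fin (ar f₀)} (hij : (j : ℕ) = i + 1)
    (hcomm : ∀ a ∈ M.lang (r.st i), ∀ b ∈ M.lang (r.st j),
      a ++ r.word i.succ ++ b = b ++ r.word i.succ ++ a) :
    M.sem = (M.setRule q₀ f₀ (r.reindex (Equiv.swap i j))).sem := by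
  refine (LTW.sem_setRule hr fun ts => LTWRule.eval_reindex fun ws hws => ?_).symm
  exact interleave_comp_swap r.word ws hij (hcomm _ ⟨_, hws i⟩ _ ⟨_, hws j⟩)

end Transducers

/-- swapping two adjacent occurrences of states that are periodic of the
same period (with empty word between them) in a rule yields an equivalent LTW. -/
theorem swap_adjacent_periodic_states_equivalent
    {F Δ Q : Type} {ar : F → ℕ} [DecidableEq F] [DecidableEq Q] [Finite Q]
    (M : LTW F ar Δ Q) (hdom : M.NonemptyDoms)
    (q₀ : Q) (f₀ : F) (r : LTWRule Δ Q (ar f₀)) (hr : M.rules q₀ f₀ = some r)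
    (i : Fin (ar f₀)) (hi : (i : ℕ) + 1 < ar f₀)
    (hu : r.word i.succ = [])
    (w : List Δ)
    (hp₁ : PeriodicOf (M.lang (r.st i)) w)
    (hp₂ : PeriodicOf (M.lang (r.st ⟨(i : ℕ) + 1, hi⟩)) w) :
    M.sem =
      (LTW.mk M.pre M.init M.post
        (Function.update M.rules q₀
          (Function.update (M.rules q₀) f₀
            (some
              ⟨r.word,
               fun k => r.st (Equiv.swap i ⟨(i : ℕ) + 1, hi⟩ k),
               (Equiv.swap i ⟨(i : ℕ) + 1, hi⟩).trans r.perm⟩)))).sem :=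
  swap_adjacent_periodic_states_equivalent_general hr rfl fun a ha b hb => by
    rw [hu, List.append_nil, List.append_nil, hp₁.1.append_comm hp₂.1 ha hb]

end LTWpaper
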